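/- arXiv:1006.0788 — 3 statements merged into one kernel-verified Lean document; each statement's English description precedes it below -/
import Mathlib

section
/- (Theorem 6.3, fully symmetric Maxwell count.) Let (G,p) be an S-symmetric framework of type Φ in ℝ^d. Choose one representative from each vertex orbit, say i₁,…,i_k, and set c = Σ_{t=1}^{k} dim U(p_{i_t}); let r be the number of edge orbits of the S-action on E; and let m be the dimension of the linear subspace of (ℝ^d)^V consisting of all fully (S,Φ)-symmetric infinitesimal rigid motions of (G,p). If r < c − m, then (G,p) has a fully (S,Φ)-symmetric infinitesimal flex, i.e., a fully (S,Φ)-symmetric infinitesimal motion that is not an infinitesimal rigid motion. -/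
open scoped Classical

noncomputable section

abbrev Euc (d : ℕ) : Type := EuclideanSpace ℝ (Fin d)

/-- The subspace of points of `ℝ^d` fixed by a linear isometry (orthogonal transformation). -/
def fixedSpace {d : ℕ} (x : Euc d ≃ₗᵢ[ℝ] Euc d) : Submodule ℝ (Euc d) :=
  LinearMap.ker (x.toLinearEquiv.toLinearMap - LinearMap.id)


/-- Theorem 6.3, fully symmetric Maxwell count: if the number `r`
of edge orbits satisfies `r < c - m`, then `(G,p)` has a fully (S,Φ)-symmetric
infinitesimal flex. -/
theorem stmt_2 {d : ℕ} {V : Type*} [Fintype V] [DecidableEq V]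
    (G : SimpleGraph V)
    (S : Subgroup (Euc d ≃ₗᵢ[ℝ] Euc d))
    (Φ : S →* Equiv.Perm V)
    (hΦadj : ∀ (x : S) (i j : V), G.Adj (Φ x i) (Φ x j) ↔ G.Adj i j)
    (p : V → Euc d) (hp : Function.Injective p)
    (hsym : ∀ (x : S) (i : V), (x : Euc d ≃ₗᵢ[ℝ] Euc d) (p i) = p (Φ x i))
    -- `R` is a set of representatives, one from each vertex orbit
    (R : Finset V)
    (hR : ∀ v : V, ∃! w : V, w ∈ R ∧ ∃ x : S, Φ x w = v)
    (c r m : ℕ)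
    -- `c` is the sum over the representatives `w` of `dim U(p_w)`
    (hc : c = ∑ w ∈ R, Module.finrank ℝ
      ↥(⨅ x ∈ {x : S | Φ x w = w}, fixedSpace (x : Euc d ≃ₗᵢ[ℝ] Euc d)))
    -- `r` is the number of edge orbits
    (hr : r = Set.ncard {O : Set (Sym2 V) |
      ∃ e ∈ G.edgeSet, O = {f | ∃ x : S, Sym2.map (Φ x) e = f}})
    -- `m` is the dimension of the space of fully symmetric infinitesimal rigid motions
    (hm : m = Set.finrank ℝ {u : V → Euc d |
      (∀ (x : S) (i : V), (x : Euc d ≃ₗᵢ[ℝ] Euc d) (u i) = u (Φ x i)) ∧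
      ∃ A : Matrix (Fin d) (Fin d) ℝ, Matrix.transpose A = -A ∧
        ∃ t : Euc d, ∀ i, u i = Matrix.toEuclideanLin A (p i) + t})
    (hcount : r < c - m) :
    ∃ u : V → Euc d,
      (∀ (x : S) (i : V), (x : Euc d ≃ₗᵢ[ℝ] Euc d) (u i) = u (Φ x i)) ∧
      (∀ i j : V, G.Adj i j → (inner ℝ (p i - p j) (u i - u j) : ℝ) = 0) ∧
      ¬ (∃ A : Matrix (Fin d) (Fin d) ℝ, Matrix.transpose A = -A ∧
        ∃ t : Euc d, ∀ i, u i = Matrix.toEuclideanLin A (p i) + t) := by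
  classical
  by_contra hcon
  push Not at hcon
  -- choose representatives and group elements
  have hR1 : ∀ v : V, ∃ w : R, ∃ x : S, Φ x w = v := by
    intro v
    obtain ⟨w, ⟨hw, x, hx⟩, -⟩ := hR v
    exact ⟨⟨w, hw⟩, x, hx⟩
  choose rep g hg using hR1
  have hrep : ∀ (w : R) (x : S) (v : V), Φ x w = v → rep v = w := by
    intro w x v h
    exact Subtype.ext ((hR v).unique ⟨(rep v).2, g v, hg v⟩ ⟨w.2, x, h⟩)
  let U : V → Submodule ℝ (Euc d) := fun w =>
    ⨅ x ∈ {x : S | Φ x w = w}, fixedSpace (x : Euc d ≃ₗᵢ[ℝ] Euc d)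
  have hU : ∀ (w : V) (a : Euc d), a ∈ U w → ∀ x : S, Φ x w = w →
      (x : Euc d ≃ₗᵢ[ℝ] Euc d) a = a := by
    intro w a ha x hx
    have h1 : a ∈ fixedSpace (x : Euc d ≃ₗᵢ[ℝ] Euc d) := by
      have := (Submodule.mem_iInf _).1 ha x
      exact (Submodule.mem_iInf _).1 this hx
    simpa [fixedSpace, sub_eq_zero] using h1
  let E : ((w : R) → U w) →ₗ[ℝ] (V → Euc d) :=
    { toFun := fun a v => (g v : Euc d ≃ₗᵢ[ℝ] Euc d) (a (rep v) : Euc d)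
      map_add' := by intro a b; ext1 v; simp
      map_smul' := by intro k a; ext1 v; simp }
  have hEdef : ∀ a v, E a v = (g v : Euc d ≃ₗᵢ[ℝ] Euc d) (a (rep v) : Euc d) := fun _ _ => rfl
  have key : ∀ (a : (w : R) → U w) (w : R) (x y : S), Φ x w = Φ y w →
      (x : Euc d ≃ₗᵢ[ℝ] Euc d) (a w : Euc d) = (y : Euc d ≃ₗᵢ[ℝ] Euc d) (a w : Euc d) := by
    intro a w x y h
    have h1 : Φ (y⁻¹ * x) w = w := by
      rw [map_mul, Equiv.Perm.mul_apply, h, ← Equiv.Perm.mul_apply, ← map_mul]; simp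
    have h2 := hU w _ (a w).2 _ h1
    have h3 := congrArg (y : Euc d ≃ₗᵢ[ℝ] Euc d) h2
    rw [← h3]
    have h4 : (x : Euc d ≃ₗᵢ[ℝ] Euc d) = (y : Euc d ≃ₗᵢ[ℝ] Euc d) * ((y⁻¹ * x : S) : Euc d ≃ₗᵢ[ℝ] Euc d) := by
      rw [← Subgroup.coe_mul, mul_inv_cancel_left]
    conv_lhs => rw [h4]
    rfl
  have hEx : ∀ (a : (w : R) → U w) (w : R) (x : S), E a (Φ x w) = (x : Euc d ≃ₗᵢ[ℝ] Euc d) (a w : Euc d) := by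
    intro a w x
    have h1 := hrep w x _ rfl
    have h2 := hg (Φ x w)
    rw [hEdef]
    rw [h1] at h2 ⊢
    exact key a w _ _ h2
  have hEsym : ∀ a (x : S) (i : V), (x : Euc d ≃ₗᵢ[ℝ] Euc d) (E a i) = E a (Φ x i) := by
    intro a x i
    have h1 : Φ x i = Φ (x * g i) (rep i) := by
      rw [map_mul, Equiv.Perm.mul_apply, hg]
    rw [h1, hEx, hEdef]
    rfl
  have hEinj : Function.Injective E := by
    intro a b h
    funext w
    have h1 := congrFun h (Φ 1 w)
    rw [hEx, hEx] at h1
    exact Subtype.ext h1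
  set T : Set (Set (Sym2 V)) := {O : Set (Sym2 V) |
      ∃ e ∈ G.edgeSet, O = {f | ∃ x : S, Sym2.map (Φ x) e = f}} with hT
  have hTr : ∀ O : T, ∃ i j : V, O.1 = {f | ∃ x : S, Sym2.map (Φ x) s(i, j) = f} := by
    rintro ⟨O, e, he, rfl⟩
    induction e with
    | _ i j => exact ⟨i, j, rfl⟩
  choose I J hIJ using hTr
  let M : ((w : R) → U w) →ₗ[ℝ] (T → ℝ) :=
    { toFun := fun a O => inner ℝ (p (I O) - p (J O)) (E a (I O) - E a (J O))
      map_add' := by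
        intro a b; ext1 O
        simp only [map_add, Pi.add_apply, ← inner_add_right]
        congr 1; abel
      map_smul' := by
        intro k a; ext1 O
        simp only [map_smul, Pi.smul_apply, ← smul_sub, inner_smul_right, RingHom.id_apply, smul_eq_mul] }
  have hM : ∀ a, M a = 0 → ∀ i j, G.Adj i j →
      (inner ℝ (p i - p j) (E a i - E a j) : ℝ) = 0 := by
    intro a ha i j hij
    let O : T := ⟨{f | ∃ x : S, Sym2.map (Φ x) s(i, j) = f}, s(i, j), hij, rfl⟩
    have h0 : inner ℝ (p (I O) - p (J O)) (E a (I O) - E a (J O)) = 0 := congrFun ha O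
    have h1 : s(i, j) ∈ O.1 := ⟨1, by simp⟩
    rw [hIJ O] at h1
    obtain ⟨x, hx⟩ := h1
    have h2 : inner ℝ (p (Φ x (I O)) - p (Φ x (J O))) (E a (Φ x (I O)) - E a (Φ x (J O))) = 0 := by
      rw [← hsym, ← hsym, ← hEsym, ← hEsym, ← map_sub, ← map_sub, LinearIsometryEquiv.inner_map_map]
      exact h0
    rw [Sym2.map_mk, Sym2.eq_iff] at hx
    rcases hx with ⟨h3, h4⟩ | ⟨h3, h4⟩
    · rw [h3, h4] at h2; exact h2
    · rw [h3, h4] at h2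
      rw [← neg_sub (p j), ← neg_sub (E a j), inner_neg_neg]; exact h2
  have hdim := LinearMap.finrank_range_add_finrank_ker M
  have hdom : Module.finrank ℝ ((w : R) → U w) = c := by
    rw [Module.finrank_pi_fintype, hc]
    exact Finset.sum_coe_sort R (fun w => Module.finrank ℝ (U w))
  have hrange : Module.finrank ℝ (LinearMap.range M) ≤ r := by
    refine (Submodule.finrank_le _).trans ?_
    rw [Module.finrank_fintype_fun_eq_card, hr, ← Nat.card_eq_fintype_card]
    exact le_of_eq rfl
  have hker : Module.finrank ℝ (LinearMap.ker M) ≤ m := by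

    rw [(Submodule.equivMapOfInjective E hEinj (LinearMap.ker M)).finrank_eq, hm]
    apply Submodule.finrank_mono
    rintro _ ⟨a, ha, rfl⟩
    apply Submodule.subset_span
    obtain ⟨A, hA, t, h⟩ := hcon (E a) (hEsym a) (hM a ha)
    exact ⟨hEsym a, A, hA, t, h⟩
  omega
end
end

section
/- (Theorem 6.1 with the Remark 6.2 hypothesis, symmetric Asimov–Roth theorem.) Let S be a finite subgroup of O(d), Φ : S → Aut(G) a homomorphism, and (G,p) an S-symmetric framework of type Φ in ℝ^d whose points p_i affinely span ℝ^d. Suppose (G,p) admits no nonzero fully (S,Φ)-symmetric self-stress (equivalently, the rows of its orbit rigidity matrix are linearly independent) and (G,p) has a fully (S,Φ)-symmetric infinitesimal flex. Then (G,p) has a finite flex which preserves the symmetry of (G,p) throughout the path. -/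
open scoped Classical

noncomputable section

open Filter Topology

/-- A surjective strict derivative: every kernel direction is tangent to a curve in the fibre. -/
lemma exists_fibre_curve {E F : Type*} [NormedAddCommGroup E] [NormedSpace ℝ E] [CompleteSpace E]
    [NormedAddCommGroup F] [NormedSpace ℝ F] [FiniteDimensional ℝ F]
    {f : E → F} {f' : E →L[ℝ] F} {a : E} (hf : HasStrictFDerivAt f f' a) (hf' : f'.range = ⊤)
    (u : E) (hu : f' u = 0) :
    ∃ γ : ℝ → E, γ 0 = a ∧ HasDerivAt γ u 0 ∧ (∀ᶠ t in 𝓝 (0 : ℝ), f (γ t) = f a) ∧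
      ∃ s ∈ 𝓝 (0 : ℝ), ContinuousOn γ s := by
  let k : f'.ker := ⟨u, hu⟩
  let ℓ : ℝ →L[ℝ] f'.ker := (ContinuousLinearMap.id ℝ ℝ).smulRight k
  have hℓ : HasStrictFDerivAt (fun t : ℝ => ℓ t) ℓ 0 := ℓ.hasStrictFDerivAt
  have h0 : ℓ 0 = 0 := map_zero ℓ
  have h1 : HasStrictFDerivAt (fun t : ℝ => hf.implicitFunction f f' hf' (f a) (ℓ t))
      (f'.ker.subtypeL.comp ℓ) 0 := by
    have := hf.to_implicitFunction hf'
    rw [← h0] at this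
    exact this.comp (0 : ℝ) hℓ
  refine ⟨fun t => hf.implicitFunction f f' hf' (f a) (ℓ t), ?_, ?_, ?_, ?_⟩
  · simp
  · have := h1.hasFDerivAt.hasDerivAt
    simpa [ℓ, k] using this
  · have h2 := hf.map_implicitFunction_eq hf'
    have h3 : Tendsto (fun t : ℝ => (f a, ℓ t)) (𝓝 0) (𝓝 (f a, 0)) := by
      have : Continuous (fun t : ℝ => (f a, ℓ t)) := by fun_prop
      have := this.tendsto 0
      rwa [h0] at this
    exact h3.eventually h2
  · obtain ⟨K, s, hs, hK⟩ := h1.exists_lipschitzOnWith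
    exact ⟨s, hs, hK.continuousOn⟩

/-- The complete graph on affinely spanning points is infinitesimally rigid. -/
lemma rigid_of_all {d : ℕ} {V : Type*} [Fintype V] (p u : V → Euc d)
    (hspan : affineSpan ℝ (Set.range p) = ⊤)
    (h : ∀ i j : V, (inner ℝ (p i - p j) (u i - u j) : ℝ) = 0) :
    ∃ A : Matrix (Fin d) (Fin d) ℝ, Matrix.transpose A = -A ∧
        ∃ t : Euc d, ∀ i, u i = Matrix.toEuclideanLin A (p i) + t := by
  have hne : Nonempty V := by
    by_contra hV
    rw [not_nonempty_iff] at hV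
    rw [Set.range_eq_empty, AffineSubspace.span_empty] at hspan
    exact AffineSubspace.bot_ne_top ℝ (Euc d) (Euc d) hspan
  obtain ⟨o⟩ := hne
  let v : V → Euc d := fun i => p i - p o
  let w : V → Euc d := fun i => u i - u o
  have hvw : ∀ i j, (inner ℝ (v i) (w j) : ℝ) = - inner ℝ (w i) (v j) := by
    intro i j
    have h1 := h i j
    have h2 := h i o
    have h3 := h j o
    have e1 : p i - p j = v i - v j := by simp [v]
    have e2 : u i - u j = w i - w j := by simp [w]
    rw [e1, e2] at h1
    change (inner ℝ (v i) (w i) : ℝ) = 0 at h2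
    change (inner ℝ (v j) (w j) : ℝ) = 0 at h3
    rw [inner_sub_left, inner_sub_right (v i) (w i), inner_sub_right (v j) (w i)] at h1
    rw [real_inner_comm (v j) (w i)]
    linarith
  let T : (V → ℝ) →ₗ[ℝ] Euc d := Fintype.linearCombination ℝ v
  let W : (V → ℝ) →ₗ[ℝ] Euc d := Fintype.linearCombination ℝ w
  have hT : LinearMap.range T = ⊤ := by
    rw [Fintype.range_linearCombination]
    have := vectorSpan_range_eq_span_range_vsub_right ℝ p o
    rw [← direction_affineSpan, hspan, AffineSubspace.direction_top] at this
    exact this.symm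
  have hTW : ∀ c c', (inner ℝ (T c) (W c') : ℝ) = - inner ℝ (W c) (T c') := by
    intro c c'
    simp only [T, W, Fintype.linearCombination_apply, sum_inner, inner_sum, inner_smul_left,
      inner_smul_right, hvw]
    simp [Finset.sum_neg_distrib]
  have hker : ∀ c, T c = 0 → W c = 0 := by
    intro c hc
    obtain ⟨c', hc'⟩ := LinearMap.range_eq_top.1 hT (W c)
    have := hTW c' c
    rw [hc, inner_zero_right, neg_zero, hc'] at this
    exact inner_self_eq_zero.1 this
  obtain ⟨g, hg⟩ := LinearMap.exists_rightInverse_of_surjective T hT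
  have hg' : ∀ x, T (g x) = x := fun x => LinearMap.congr_fun hg x
  let L : Euc d →ₗ[ℝ] Euc d := W ∘ₗ g
  have hL : ∀ x y, (inner ℝ x (L y) : ℝ) = - inner ℝ (L x) y := by
    intro x y
    have := hTW (g x) (g y)
    rwa [hg', hg'] at this
  have hLv : ∀ i, L (v i) = w i := by
    intro i
    have h1 : T (g (v i) - Pi.single i 1) = 0 := by
      rw [map_sub, hg']
      simp [T]
    have h2 := hker _ h1
    rw [map_sub, sub_eq_zero] at h2
    change W (g (v i)) = _
    rw [h2]
    simp [W]
  refine ⟨Matrix.toEuclideanLin.symm L, ?_, u o - L (p o), ?_⟩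
  · have key : ∀ i j, Matrix.toEuclideanLin.symm L i j
        = inner ℝ (EuclideanSpace.single i (1:ℝ)) (L (EuclideanSpace.single j 1)) := by
      intro i j
      obtain ⟨M, hM⟩ := Matrix.toEuclideanLin.surjective L
      rw [← hM, LinearEquiv.symm_apply_apply]
      simp [EuclideanSpace.inner_single_left]
    ext i j
    rw [Matrix.transpose_apply, Matrix.neg_apply, key, key, hL, real_inner_comm]
  · intro i
    rw [LinearEquiv.apply_symm_apply]
    have := hLv i
    simp only [v, w, map_sub] at this
    rw [show u i = (u i - u o) + u o by abel, ← this]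
    abel

/-- The squared edge length map, on ordered pairs. -/
def edgeSq {d : ℕ} {V : Type*} [Fintype V] (G : SimpleGraph V) (q : V → Euc d) :
    EuclideanSpace ℝ (V × V) :=
  WithLp.toLp 2 fun e => if G.Adj e.1 e.2 then ‖q e.1 - q e.2‖ ^ 2 else 0

/-- Component of the derivative of `edgeSq`. -/
def edgeDComp {d : ℕ} {V : Type*} [Fintype V] (G : SimpleGraph V) (p : V → Euc d) (e : V × V) :
    (V → Euc d) →L[ℝ] ℝ :=
  if G.Adj e.1 e.2 then
    2 • (innerSL ℝ (p e.1 - p e.2)).comp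
      (ContinuousLinearMap.proj (R := ℝ) (φ := fun _ : V => Euc d) e.1 -
        ContinuousLinearMap.proj (R := ℝ) (φ := fun _ : V => Euc d) e.2)
  else 0

lemma edgeDComp_apply {d : ℕ} {V : Type*} [Fintype V] (G : SimpleGraph V) (p : V → Euc d)
    (e : V × V) (u : V → Euc d) :
    edgeDComp G p e u =
      if G.Adj e.1 e.2 then 2 * inner ℝ (p e.1 - p e.2) (u e.1 - u e.2) else 0 := by
  unfold edgeDComp
  split_ifs <;> simp [inner_sub_left, inner_sub_right]

/-- The derivative of `edgeSq`. -/
def edgeD {d : ℕ} {V : Type*} [Fintype V] (G : SimpleGraph V) (p : V → Euc d) :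
    (V → Euc d) →L[ℝ] EuclideanSpace ℝ (V × V) :=
  ((PiLp.continuousLinearEquiv 2 ℝ (fun _ : V × V => ℝ)).symm :
    (V × V → ℝ) →L[ℝ] EuclideanSpace ℝ (V × V)).comp (ContinuousLinearMap.pi (edgeDComp G p))

lemma edgeD_apply {d : ℕ} {V : Type*} [Fintype V] (G : SimpleGraph V) (p : V → Euc d)
    (e : V × V) (u : V → Euc d) :
    edgeD G p u e =
      if G.Adj e.1 e.2 then 2 * inner ℝ (p e.1 - p e.2) (u e.1 - u e.2) else 0 := by
  rw [← edgeDComp_apply]; rfl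

lemma hasStrictFDerivAt_edgeSq {d : ℕ} {V : Type*} [Fintype V] (G : SimpleGraph V)
    (p : V → Euc d) : HasStrictFDerivAt (edgeSq G) (edgeD G p) p := by
  rw [hasStrictFDerivAt_euclidean]
  intro e
  have h1 : PiLp.proj 2 (fun _ : V × V => ℝ) e ∘L edgeD G p = edgeDComp G p e := rfl
  erw [h1]
  simp only [edgeSq, edgeDComp]
  split_ifs with h
  · have h2 : HasStrictFDerivAt (fun q : V → Euc d => q e.1 - q e.2)
      (ContinuousLinearMap.proj (R := ℝ) (φ := fun _ : V => Euc d) e.1 -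
        ContinuousLinearMap.proj (R := ℝ) (φ := fun _ : V => Euc d) e.2) p :=
      (ContinuousLinearMap.proj (R := ℝ) (φ := fun _ : V => Euc d) e.1 -
        ContinuousLinearMap.proj (R := ℝ) (φ := fun _ : V => Euc d) e.2).hasStrictFDerivAt
    exact (hasStrictFDerivAt_norm_sq (p e.1 - p e.2)).comp p h2
  · exact hasStrictFDerivAt_const _ _

/-- Fully symmetric maps. -/
def symSpace {d : ℕ} {V : Type*} (S : Subgroup (Euc d ≃ₗᵢ[ℝ] Euc d)) (Φ : S →* Equiv.Perm V) :
    Submodule ℝ (V → Euc d) where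
  carrier := {u | ∀ (x : S) (i : V), (x : Euc d ≃ₗᵢ[ℝ] Euc d) (u i) = u (Φ x i)}
  add_mem' := by
    intro a b ha hb x i
    simp [ha x i, hb x i]
  zero_mem' := by intro x i; simp
  smul_mem' := by
    intro c a ha x i
    simp [ha x i]

/-- Symmetric invariant weights on ordered pairs supported on edges. -/
def wtSpace {d : ℕ} {V : Type*} [Fintype V] (G : SimpleGraph V)
    (S : Subgroup (Euc d ≃ₗᵢ[ℝ] Euc d)) (Φ : S →* Equiv.Perm V) :
    Submodule ℝ (EuclideanSpace ℝ (V × V)) where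
  carrier := {ω | (∀ i j, ω (i, j) = ω (j, i)) ∧ (∀ i j, ¬ G.Adj i j → ω (i, j) = 0) ∧
    ∀ (x : S) i j, ω (Φ x i, Φ x j) = ω (i, j)}
  add_mem' := by
    rintro a b ⟨ha1, ha2, ha3⟩ ⟨hb1, hb2, hb3⟩
    refine ⟨fun i j => ?_, fun i j h => ?_, fun x i j => ?_⟩
    · simp [ha1 i j, hb1 i j]
    · simp [ha2 i j h, hb2 i j h]
    · simp [ha3, hb3]
  zero_mem' := by simp
  smul_mem' := by
    rintro c a ⟨ha1, ha2, ha3⟩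
    refine ⟨fun i j => ?_, fun i j h => ?_, fun x i j => ?_⟩
    · simp [ha1 i j]
    · simp [ha2 i j h]
    · simp [ha3]

lemma edgeSq_mem {d : ℕ} {V : Type*} [Fintype V] (G : SimpleGraph V)
    (S : Subgroup (Euc d ≃ₗᵢ[ℝ] Euc d)) (Φ : S →* Equiv.Perm V)
    (hΦadj : ∀ (x : S) (i j : V), G.Adj (Φ x i) (Φ x j) ↔ G.Adj i j)
    (q : V → Euc d) (hq : q ∈ symSpace S Φ) : edgeSq G q ∈ wtSpace G S Φ := by
  refine ⟨fun i j => ?_, fun i j h => ?_, fun x i j => ?_⟩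
  · simp only [edgeSq, G.adj_comm i j, norm_sub_rev (q i)]
  · simp [edgeSq, h]
  · simp only [edgeSq, hΦadj]
    rw [← hq x i, ← hq x j, ← map_sub, LinearIsometryEquiv.norm_map]

/-- Stress pairing. -/
lemma inner_edgeD {d : ℕ} {V : Type*} [Fintype V] (G : SimpleGraph V) (p u : V → Euc d)
    (ω : EuclideanSpace ℝ (V × V)) (h1 : ∀ i j, ω (i, j) = ω (j, i))
    (h2 : ∀ i j, ¬ G.Adj i j → ω (i, j) = 0) :
    (inner ℝ ω (edgeD G p u) : ℝ) =
      4 * ∑ i, inner ℝ (∑ j, ω (i, j) • (p i - p j)) (u i) := by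
  have e1 : (inner ℝ ω (edgeD G p u) : ℝ) =
      ∑ i, ∑ j, 2 * (ω (i, j) * inner ℝ (p i - p j) (u i - u j)) := by
    rw [PiLp.inner_apply, Fintype.sum_prod_type]
    refine Finset.sum_congr rfl fun i _ => Finset.sum_congr rfl fun j _ => ?_
    rw [edgeD_apply]
    by_cases h : G.Adj i j
    · simp [h]; ring
    · simp [h, h2 i j h]
  have e2 : ∑ i, ∑ j, ω (i, j) * (inner ℝ (p i - p j) (u j) : ℝ) =
      - ∑ i, ∑ j, ω (i, j) * (inner ℝ (p i - p j) (u i) : ℝ) := by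
    rw [Finset.sum_comm, ← Finset.sum_neg_distrib]
    refine Finset.sum_congr rfl fun i _ => ?_
    rw [← Finset.sum_neg_distrib]
    refine Finset.sum_congr rfl fun j _ => ?_
    rw [h1 j i, ← neg_sub (p i) (p j), inner_neg_left]; ring
  rw [e1]
  simp only [sum_inner, inner_smul_left, inner_sub_right, mul_sub, Finset.sum_sub_distrib,
    ← Finset.mul_sum]
  rw [e2]
  simp only [conj_trivial]
  ring

/-- Theorem 6.1 with the Remark 6.2 hypothesis, symmetric
Asimov–Roth theorem: an independent (no nonzero fully symmetric self-stress)
S-symmetric framework with a fully symmetric infinitesimal flex has a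
symmetry-preserving finite flex. -/
theorem stmt_3 {d : ℕ} {V : Type*} [Fintype V] [DecidableEq V]
    (G : SimpleGraph V) [DecidableRel G.Adj]
    (S : Subgroup (Euc d ≃ₗᵢ[ℝ] Euc d)) [Finite S]
    (Φ : S →* Equiv.Perm V)
    (hΦadj : ∀ (x : S) (i j : V), G.Adj (Φ x i) (Φ x j) ↔ G.Adj i j)
    (p : V → Euc d) (hp : Function.Injective p)
    (hsym : ∀ (x : S) (i : V), (x : Euc d ≃ₗᵢ[ℝ] Euc d) (p i) = p (Φ x i))
    (hspan : affineSpan ℝ (Set.range p) = ⊤)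
    -- no nonzero fully (S,Φ)-symmetric self-stress
    (hnostress : ∀ ω : Sym2 V → ℝ,
      (∀ i : V, ∑ j ∈ G.neighborFinset i, ω s(i, j) • (p i - p j) = 0) →
      (∀ (x : S), ∀ e ∈ G.edgeSet, ω (Sym2.map (Φ x) e) = ω e) →
      ∀ e ∈ G.edgeSet, ω e = 0)
    -- a fully (S,Φ)-symmetric infinitesimal flex exists
    (hflex : ∃ u : V → Euc d,
      (∀ (x : S) (i : V), (x : Euc d ≃ₗᵢ[ℝ] Euc d) (u i) = u (Φ x i)) ∧
      (∀ i j : V, G.Adj i j → (inner ℝ (p i - p j) (u i - u j) : ℝ) = 0) ∧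
      ¬ (∃ A : Matrix (Fin d) (Fin d) ℝ, Matrix.transpose A = -A ∧
        ∃ t : Euc d, ∀ i, u i = Matrix.toEuclideanLin A (p i) + t)) :
    -- conclusion: a finite flex preserving the symmetry throughout the path
    ∃ P : ℝ → V → Euc d,
      ContinuousOn P (Set.Icc 0 1) ∧
      P 0 = p ∧
      (∀ t ∈ Set.Icc (0:ℝ) 1, ∀ i j : V, G.Adj i j → ‖P t i - P t j‖ = ‖p i - p j‖) ∧
      (∃ k l : V, ∀ t ∈ Set.Ioc (0:ℝ) 1, ‖P t k - P t l‖ ≠ ‖p k - p l‖) ∧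
      (∀ t ∈ Set.Icc (0:ℝ) 1, ∀ (x : S) (i : V),
        (x : Euc d ≃ₗᵢ[ℝ] Euc d) (P t i) = P t (Φ x i)) := by
  obtain ⟨u, husym, hu0, hur⟩ := hflex
  have hkl : ∃ k l : V, (inner ℝ (p k - p l) (u k - u l) : ℝ) ≠ 0 := by
    by_contra hcon
    push Not at hcon
    exact hur (rigid_of_all p u hspan hcon)
  obtain ⟨k, l, hkl⟩ := hkl
  let U := symSpace S Φ
  let W := wtSpace G S Φ
  let pU : U := ⟨p, hsym⟩
  let uU : U := ⟨u, husym⟩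
  let prj := W.orthogonalProjectionOnto
  let f : U → W := fun q => prj (edgeSq G (q : V → Euc d))
  let f' : U →L[ℝ] W := prj.comp ((edgeD G p).comp U.subtypeL)
  have hf : HasStrictFDerivAt f f' pU := by
    have h1 : HasStrictFDerivAt (fun q : U => (q : V → Euc d)) U.subtypeL pU :=
      U.subtypeL.hasStrictFDerivAt
    have h2 : HasStrictFDerivAt (fun q : U => edgeSq G (q : V → Euc d))
        ((edgeD G p).comp U.subtypeL) pU := (hasStrictFDerivAt_edgeSq G p).comp pU h1
    exact (prj.hasStrictFDerivAt (x := edgeSq G p)).comp pU h2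
  have hrange : f'.range = ⊤ := by
    rw [← Submodule.orthogonal_eq_bot_iff, Submodule.eq_bot_iff]
    intro ω hω
    obtain ⟨h1, h2, h3⟩ := ω.2
    rw [Submodule.mem_orthogonal'] at hω
    have h4 : ∀ q : U, (inner ℝ (ω : EuclideanSpace ℝ (V × V)) (edgeD G p q) : ℝ) = 0 := by
      intro q
      have := hω (f' q) ⟨q, rfl⟩
      rw [← this]
      exact (Submodule.inner_orthogonalProjectionOnto_eq_of_mem_left ω _).symm
    let F : V → Euc d := fun i => ∑ j, (ω : EuclideanSpace ℝ (V × V)) (i, j) • (p i - p j)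
    have hF : F ∈ U := by
      intro x i
      simp only [F, map_sum, map_smul, map_sub, hsym]
      rw [← Equiv.sum_comp (Φ x) (fun j =>
        (ω : EuclideanSpace ℝ (V × V)) (Φ x i, j) • (p (Φ x i) - p j))]
      refine Finset.sum_congr rfl fun j _ => ?_
      rw [h3]
    have h5 := h4 ⟨F, hF⟩
    rw [inner_edgeD G p F _ h1 h2] at h5
    have h6 : ∑ i, (inner ℝ (F i) (F i) : ℝ) = 0 := by
      have : (4 : ℝ) * ∑ i, (inner ℝ (F i) (F i) : ℝ) = 0 := h5
      linarith
    have h7 : ∀ i, F i = 0 := by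
      intro i
      rw [Finset.sum_eq_zero_iff_of_nonneg (fun i _ => real_inner_self_nonneg)] at h6
      exact inner_self_eq_zero.1 (h6 i (Finset.mem_univ i))
    let ω' : Sym2 V → ℝ := Sym2.lift ⟨fun i j => (ω : EuclideanSpace ℝ (V × V)) (i, j), h1⟩
    have h8 := hnostress ω' ?_ ?_
    · ext ⟨i, j⟩
      by_cases h : G.Adj i j
      · exact h8 s(i, j) h
      · exact h2 i j h
    · intro i
      rw [← h7 i]
      refine Finset.sum_subset (Finset.subset_univ _) ?_
      intro j _ hj
      rw [SimpleGraph.mem_neighborFinset] at hj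
      change (ω : EuclideanSpace ℝ (V × V)) (i, j) • (p i - p j) = 0
      rw [h2 i j hj, zero_smul]
    · intro x e _
      induction e with
      | _ i j => exact h3 x i j
  have hu : f' uU = 0 := by
    have : edgeD G p u = 0 := by
      ext ⟨i, j⟩
      rw [edgeD_apply]
      split_ifs with h
      · simp [hu0 i j h]
      · rfl
    change prj (edgeD G p u) = 0
    rw [this, map_zero]
  obtain ⟨γ, hγ0, hγd, hγf, s, hs, hγc⟩ := exists_fibre_curve hf hrange uU hu
  have hne : ∀ᶠ t in 𝓝[>] (0 : ℝ),
      ‖(γ t : V → Euc d) k - (γ t : V → Euc d) l‖ ≠ ‖p k - p l‖ := by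
    have hd1 : HasDerivAt (fun t => (γ t : V → Euc d)) u 0 :=
      U.subtypeL.hasFDerivAt.comp_hasDerivAt 0 hγd
    have hd2 := ((hasDerivAt_pi.1 hd1 k).sub (hasDerivAt_pi.1 hd1 l)).norm_sq
    have hd3 := hd2.eventually_ne (c := ‖p k - p l‖ ^ 2) (by
      simpa [hγ0, pU] using hkl)
    have := hd3.filter_mono (nhdsWithin_mono 0 (fun t (ht : 0 < t) => ht.ne'))
    filter_upwards [this] with t ht h
    exact ht (by simp [h])
  have hall : ∀ᶠ t in 𝓝[>] (0 : ℝ), 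
      ‖(γ t : V → Euc d) k - (γ t : V → Euc d) l‖ ≠ ‖p k - p l‖ ∧ f (γ t) = f pU ∧ t ∈ s :=
    hne.and ((hγf.filter_mono nhdsWithin_le_nhds).and (nhdsWithin_le_nhds hs))
  obtain ⟨ε, hε, hεs⟩ := (mem_nhdsGT_iff_exists_Ioc_subset).1 hall
  have hε : 0 < ε := hε
  have hmem : ∀ t ∈ Set.Ioc (0:ℝ) 1, ε * t ∈ Set.Ioc 0 ε := fun t ht =>
    ⟨mul_pos hε ht.1, by nlinarith [ht.2]⟩
  have hfib : ∀ t ∈ Set.Icc (0:ℝ) 1, f (γ (ε * t)) = f pU := by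
    intro t ht
    rcases ht.1.eq_or_lt with h | h
    · rw [← h, mul_zero, hγ0]
    · exact (hεs (hmem t ⟨h, ht.2⟩)).2.1
  refine ⟨fun t => (γ (ε * t) : V → Euc d), ?_, ?_, ?_, ⟨k, l, ?_⟩, ?_⟩
  · have : ContinuousOn (fun t => γ (ε * t)) (Set.Icc (0:ℝ) 1) := by
      refine hγc.comp (by fun_prop) ?_
      intro t ht
      rcases ht.1.eq_or_lt with h | h
      · simp only [← h, mul_zero]; exact mem_of_mem_nhds hs
      · exact (hεs (hmem t ⟨h, ht.2⟩)).2.2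
    exact continuous_subtype_val.comp_continuousOn this
  · simp [hγ0, pU]
  · intro t ht i j hij
    have h1 := congrArg (Subtype.val) (hfib t ht)
    have h2 : edgeSq G (γ (ε * t) : V → Euc d) = edgeSq G p := by
      have e1 : ∀ q : U, (f q : EuclideanSpace ℝ (V × V)) = edgeSq G (q : V → Euc d) := fun q =>
        congrArg Subtype.val (Submodule.orthogonalProjectionOnto_mem_subspace_eq_self
          (K := W) ⟨_, edgeSq_mem G S Φ hΦadj q q.2⟩)
      have := (e1 (γ (ε * t))).symm.trans (h1.trans (e1 pU))
      exact this
    have h3 := congrArg (fun z : EuclideanSpace ℝ (V × V) => z (i, j)) h2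
    simp only [edgeSq, hij, if_true] at h3
    exact (sq_eq_sq₀ (norm_nonneg _) (norm_nonneg _)).1 h3
  · intro t ht
    exact (hεs (hmem t ht)).1
  · intro t ht x i
    exact (γ (ε * t)).2 x i
end
end

section
/- (Infinitesimal form of Theorem 6.6.) Let G be a finite simple graph with |E| = 3|V| − 6, let C ∈ O(3) be a half-turn (an orthogonal involution of ℝ³ with determinant 1 whose fixed subspace is 1-dimensional), S = {I, C}, and let Φ : S → Aut(G) be a homomorphism such that Φ(C) has no fixed vertex and fixes no edge setwise. Then every S-symmetric framework (G,p) of type Φ in ℝ³ whose points p_i affinely span ℝ³ has a fully (S,Φ)-symmetric infinitesimal flex, i.e., a fully (S,Φ)-symmetric infinitesimal motion that is not an infinitesimal rigid motion. -/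
open scoped Classical

noncomputable section

/-- Orbit representatives of a fixed-point-free involution. -/
theorem exists_reps {X : Type*} [Fintype X] (τ : X → X) (h2 : ∀ x, τ (τ x) = x)
    (hf : ∀ x, τ x ≠ x) :
    ∃ R : Finset X, 2 * R.card = Fintype.card X ∧ ∀ x, x ∈ R ↔ τ x ∉ R := by
  let e := Fintype.equivFin X
  have hkey : ∀ x, x ∈ (Finset.univ.filter fun x => e x < e (τ x)) ↔
      τ x ∉ (Finset.univ.filter fun x => e x < e (τ x)) := by
    intro x
    have hne : e (τ x) ≠ e x := fun h => hf x (e.injective h)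
    simp only [Finset.mem_filter, Finset.mem_univ, true_and, h2, not_lt]
    exact ⟨le_of_lt, fun h => lt_of_le_of_ne h hne.symm⟩
  refine ⟨Finset.univ.filter fun x => e x < e (τ x), ?_, hkey⟩
  generalize (Finset.univ.filter fun x => e x < e (τ x)) = R at hkey
  have hinj : Function.Injective τ := fun a b h => by rw [← h2 a, h, h2]
  have himg : R.image τ = Rᶜ := by
    ext x
    simp only [Finset.mem_image, Finset.mem_compl]
    constructor
    · rintro ⟨y, hy, rfl⟩
      exact (hkey y).1 hy
    · intro hx
      refine ⟨τ x, ?_, h2 x⟩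
      rw [hkey, h2]; exact hx
  have h1 : (R.image τ).card = R.card := Finset.card_image_of_injective _ hinj
  rw [himg] at h1
  have := Finset.card_add_card_compl R
  omega

/-- The cross-product matrix of `n`. -/
def crossMat (n : Euc 3) : Matrix (Fin 3) (Fin 3) ℝ :=
  !![0, -n 2, n 1; n 2, 0, -n 0; -n 1, n 0, 0]

theorem skew_kernel (A : Matrix (Fin 3) (Fin 3) ℝ) (hA : Matrix.transpose A = -A)
    (n : Euc 3) (hn : n ≠ 0) (h0 : Matrix.toEuclideanLin A n = 0) :
    ∃ c : ℝ, A = c • crossMat n := by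
  have hs : ∀ i j, A j i = - A i j := fun i j => by
    have := congrFun (congrFun hA i) j
    simpa using this
  have h00 : A 0 0 = 0 := by linarith [hs 0 0]
  have h11 : A 1 1 = 0 := by linarith [hs 1 1]
  have h22 : A 2 2 = 0 := by linarith [hs 2 2]
  have h10 := hs 0 1
  have h20 := hs 0 2
  have h21 := hs 1 2
  have e : ∀ i, A i 0 * n 0 + A i 1 * n 1 + A i 2 * n 2 = 0 := fun i => by
    have := congrArg (fun v : Euc 3 => v i) h0
    simpa [Matrix.toLpLin_apply, Matrix.mulVec, dotProduct, Fin.sum_univ_three] using this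
  have e0 := e 0
  have e1 := e 1
  have e2 := e 2
  rw [h00] at e0
  rw [h10, h11] at e1
  rw [h20, h21, h22] at e2
  have key : ∃ c : ℝ, A 0 1 = c * (-n 2) ∧ A 0 2 = c * n 1 ∧ A 1 2 = c * (-n 0) := by
    by_cases hn0 : n 0 = 0
    · by_cases hn1 : n 1 = 0
      · by_cases hn2 : n 2 = 0
        · exfalso; apply hn; ext i; fin_cases i <;> simpa
        · refine ⟨- A 0 1 / n 2, ?_, ?_, ?_⟩ <;> field_simp <;> linarith
      · refine ⟨A 0 2 / n 1, ?_, ?_, ?_⟩ <;> field_simp <;> linarith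
    · refine ⟨- A 1 2 / n 0, ?_, ?_, ?_⟩ <;> field_simp <;> linarith
  obtain ⟨c, k1, k2, k3⟩ := key
  refine ⟨c, ?_⟩
  ext i j
  fin_cases i <;> fin_cases j <;> simp [crossMat, h00, h11, h22, h10, h20, h21, k1, k2, k3]

theorem skew_inner (A : Matrix (Fin 3) (Fin 3) ℝ) (hA : Matrix.transpose A = -A)
    (n : Euc 3) : inner ℝ n (Matrix.toEuclideanLin A n) = (0 : ℝ) := by
  have hs : ∀ i j, A j i = - A i j := fun i j => by
    have := congrFun (congrFun hA i) j
    simpa using this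
  have h00 : A 0 0 = 0 := by linarith [hs 0 0]
  have h11 : A 1 1 = 0 := by linarith [hs 1 1]
  have h22 : A 2 2 = 0 := by linarith [hs 2 2]
  simp [PiLp.inner_apply, Matrix.toLpLin_apply, Matrix.mulVec, dotProduct, Fin.sum_univ_three,
    h00, h11, h22, hs 0 1, hs 0 2, hs 1 2]
  ring

/-- A symmetric rigid motion is a combination of the screw motions about the axis. -/
theorem rigid_form {V : Type*} (C : Euc 3 ≃ₗᵢ[ℝ] Euc 3) (n : Euc 3) (hn : n ≠ 0) (hCn : C n = n)
    (hfix : ∀ v, C v = v → ∃ c : ℝ, c • n = v)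
    (σ : Equiv.Perm V) (p : V → Euc 3) (hsym : ∀ i, C (p i) = p (σ i))
    (hspan : affineSpan ℝ (Set.range p) = ⊤) (u : V → Euc 3) (hu : ∀ i, C (u i) = u (σ i))
    (A : Matrix (Fin 3) (Fin 3) ℝ) (hA : Matrix.transpose A = -A) (t : Euc 3)
    (h : ∀ i, u i = Matrix.toEuclideanLin A (p i) + t) :
    ∃ c d : ℝ, u = c • (fun i => Matrix.toEuclideanLin (crossMat n) (p i)) + d • (fun _ => n) := by
  let L := Matrix.toEuclideanLin A
  let Cl : Euc 3 →ₗ[ℝ] Euc 3 := C.toLinearEquiv.toLinearMap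
  let f : Euc 3 →ᵃ[ℝ] Euc 3 := (Cl ∘ₗ L).toAffineMap + AffineMap.const ℝ _ (C t)
  let g : Euc 3 →ᵃ[ℝ] Euc 3 := (L ∘ₗ Cl).toAffineMap + AffineMap.const ℝ _ t
  have hfg : f = g := by
    apply AffineMap.ext_on hspan
    rintro _ ⟨i, rfl⟩
    have h1 := hu i
    rw [h, h, map_add, ← hsym] at h1
    exact h1
  have hall : ∀ x, C (L x) + C t = L (C x) + t := fun x => congrArg (fun k => k x) hfg
  have ht : C t = t := by simpa using hall 0
  have hcomm : ∀ x, C (L x) = L (C x) := fun x => by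
    have := hall x
    rw [ht] at this
    exact add_right_cancel this
  obtain ⟨d, hd⟩ := hfix t ht
  obtain ⟨b, hb⟩ := hfix (L n) (by rw [hcomm, hCn])
  have hLn : L n = 0 := by
    have h1 : inner ℝ n (L n) = (0 : ℝ) := skew_inner A hA n
    rw [← hb, inner_smul_right] at h1
    rcases mul_eq_zero.1 h1 with h2 | h2
    · rw [← hb, h2, zero_smul]
    · exact absurd (inner_self_eq_zero.1 h2) hn
  obtain ⟨c, hc⟩ := skew_kernel A hA n hn hLn
  refine ⟨c, d, ?_⟩
  funext i
  rw [h, hc, ← hd]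
  simp

/-- infinitesimal form of Theorem 6.6: with half-turn symmetry
in 3-space, no fixed vertex and no fixed edge, and `|E| = 3|V| - 6`, every
symmetric framework whose points span `ℝ³` has a fully symmetric infinitesimal
flex. -/
theorem stmt_11 {V : Type*} [Fintype V] [DecidableEq V]
    (G : SimpleGraph V) [DecidableRel G.Adj]
    (hcount : G.edgeFinset.card + 6 = 3 * Fintype.card V)
    (C : Euc 3 ≃ₗᵢ[ℝ] Euc 3) (hC2 : ∀ v, C (C v) = v)
    (hdet : LinearMap.det (C.toLinearEquiv.toLinearMap) = 1)
    (hhalf : Module.finrank ℝ (fixedSpace C) = 1)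
    (σ : Equiv.Perm V) (hσ2 : σ * σ = 1)
    (hσadj : ∀ i j : V, G.Adj (σ i) (σ j) ↔ G.Adj i j)
    (hnofixv : ∀ i : V, σ i ≠ i)
    (hnofixe : ∀ e ∈ G.edgeSet, Sym2.map σ e ≠ e)
    (p : V → Euc 3) (hp : Function.Injective p)
    (hsym : ∀ i, C (p i) = p (σ i))
    (hspan : affineSpan ℝ (Set.range p) = ⊤) :
    ∃ u : V → Euc 3,
      (∀ i, C (u i) = u (σ i)) ∧
      (∀ i j : V, G.Adj i j → (inner ℝ (p i - p j) (u i - u j) : ℝ) = 0) ∧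
      ¬ (∃ A : Matrix (Fin 3) (Fin 3) ℝ, Matrix.transpose A = -A ∧
        ∃ t : Euc 3, ∀ i, u i = Matrix.toEuclideanLin A (p i) + t) := by
  classical
  have hσσ : ∀ i, σ (σ i) = i := fun i => by
    have := congrArg (fun k : Equiv.Perm V => k i) hσ2
    simpa using this
  -- the axis
  obtain ⟨n, hn, hfix⟩ : ∃ n : Euc 3, (n ≠ 0 ∧ C n = n) ∧ ∀ v, C v = v → ∃ c : ℝ, c • n = v := by
    have hmem : ∀ v, v ∈ fixedSpace C ↔ C v = v := fun v => by
      simp [fixedSpace, sub_eq_zero]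
    obtain ⟨⟨n, hnm⟩, hn0, hn1⟩ := finrank_eq_one_iff'.1 hhalf
    refine ⟨n, ⟨fun h => hn0 (Subtype.ext h), (hmem n).1 hnm⟩, fun v hv => ?_⟩
    obtain ⟨c, hc⟩ := hn1 ⟨v, (hmem v).2 hv⟩
    exact ⟨c, congrArg Subtype.val hc⟩
  obtain ⟨R, hRcard, hR⟩ := exists_reps (σ : V → V) hσσ hnofixv
  -- edges
  let τ : G.edgeSet → G.edgeSet := fun e => ⟨Sym2.map σ e.1, by
    obtain ⟨e, he⟩ := e
    induction e with
    | _ i j => simpa [hσadj] using he⟩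
  have hτ2 : ∀ e, τ (τ e) = e := by
    rintro ⟨e, he⟩
    apply Subtype.ext
    induction e with
    | _ i j => simp [τ, hσσ]
  have hτf : ∀ e, τ e ≠ e := fun e h => hnofixe e.1 e.2 (congrArg Subtype.val h)
  obtain ⟨RE, hREcard, hRE⟩ := exists_reps τ hτ2 hτf
  have hab : ∀ e : G.edgeSet, ∃ ab : V × V, e.1 = s(ab.1, ab.2) := by
    rintro ⟨e, he⟩
    induction e with
    | _ i j => exact ⟨(i, j), rfl⟩
  choose ab hab using hab
  -- extension map
  let Cl : Euc 3 →ₗ[ℝ] Euc 3 := C.toLinearEquiv.toLinearMap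
  let ext : (R → Euc 3) →ₗ[ℝ] (V → Euc 3) := LinearMap.pi fun i =>
    if h : i ∈ R then LinearMap.proj ⟨i, h⟩
    else Cl ∘ₗ LinearMap.proj ⟨σ i, by rw [hR, hσσ]; exact h⟩
  have hext1 : ∀ f i (h : i ∈ R), ext f i = f ⟨i, h⟩ := fun f i h => by
    simp [ext, h]
  have hext2 : ∀ f i (h : i ∉ R), ext f i = C (f ⟨σ i, by rw [hR, hσσ]; exact h⟩) :=
    fun f i h => by simp [ext, h, Cl]
  have hextsym : ∀ f i, C (ext f i) = ext f (σ i) := by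
    intro f i
    by_cases h : i ∈ R
    · rw [hext1 f i h, hext2 f (σ i) ((hR i).1 h)]
      congr 2
      exact Subtype.ext (hσσ i).symm
    · rw [hext2 f i h, hC2, hext1]
  have hextinj : Function.Injective ext := by
    intro f g hfg
    funext ⟨i, hi⟩
    rw [← hext1 f i hi, ← hext1 g i hi, hfg]
  -- rigidity map
  let rig : (V → Euc 3) →ₗ[ℝ] (RE → ℝ) := LinearMap.pi fun e =>
    (innerₛₗ ℝ (p (ab e.1).1 - p (ab e.1).2)) ∘ₗ
      ((LinearMap.proj (ab e.1).1 : (V → Euc 3) →ₗ[ℝ] Euc 3) - LinearMap.proj (ab e.1).2)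
  have hrig : ∀ u e, rig u e = inner ℝ (p (ab e.1).1 - p (ab e.1).2)
      (u (ab e.1).1 - u (ab e.1).2) := fun u e => by simp [rig, inner_sub_left]
  let K := LinearMap.ker (rig ∘ₗ ext)
  have hK : 3 ≤ Module.finrank ℝ K := by
    have h1 := LinearMap.finrank_range_add_finrank_ker (rig ∘ₗ ext)
    have h2 := Submodule.finrank_le (LinearMap.range (rig ∘ₗ ext))
    have h3 : Module.finrank ℝ (R → Euc 3) = R.card * 3 := by
      rw [Module.finrank_pi_fintype]; simp
    have h4 : Module.finrank ℝ (RE → ℝ) = RE.card := by simp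
    have h5 : Fintype.card G.edgeSet = G.edgeFinset.card := by
      rw [SimpleGraph.edgeFinset_card]
    have h6 : Module.finrank ℝ K = Module.finrank ℝ (LinearMap.ker (rig ∘ₗ ext)) := rfl
    omega
  have hmotion : ∀ f ∈ K, ∀ i j : V, G.Adj i j →
      (inner ℝ (p i - p j) (ext f i - ext f j) : ℝ) = 0 := by
    intro f hf
    have hin : ∀ i j (h : G.Adj i j), (⟨s(i, j), h⟩ : G.edgeSet) ∈ RE →
        (inner ℝ (p i - p j) (ext f i - ext f j) : ℝ) = 0 := by
      intro i j h hm
      have h0 : rig (ext f) ⟨_, hm⟩ = 0 := congrFun (LinearMap.mem_ker.1 hf) ⟨_, hm⟩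
      rw [hrig] at h0
      have h1 := hab ⟨s(i, j), h⟩
      rcases Sym2.eq_iff.1 h1 with ⟨h2, h3⟩ | ⟨h2, h3⟩
      · simp only [← h2, ← h3] at h0
        exact h0
      · simp only [← h2, ← h3] at h0
        rw [← inner_neg_neg, neg_sub, neg_sub]
        exact h0
    intro i j h
    by_cases hm : (⟨s(i, j), h⟩ : G.edgeSet) ∈ RE
    · exact hin i j h hm
    · have hm' : τ ⟨s(i, j), h⟩ ∈ RE := by rw [hRE, hτ2]; exact hm
      have := hin (σ i) (σ j) ((hσadj i j).2 h) hm'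
      rw [← hsym, ← hsym, ← hextsym, ← hextsym, ← map_sub, ← map_sub,
        LinearIsometryEquiv.inner_map_map] at this
      exact this
  by_contra hcon
  push Not at hcon
  let w1 : V → Euc 3 := fun i => Matrix.toEuclideanLin (crossMat n) (p i)
  let w2 : V → Euc 3 := fun _ => n
  have hle : K.map ext ≤ Submodule.span ℝ (({w1, w2} : Finset (V → Euc 3)) : Set (V → Euc 3)) := by
    rintro _ ⟨f, hf, rfl⟩
    obtain ⟨A, hA, t, h⟩ := hcon (ext f) (hextsym f) (hmotion f hf)
    obtain ⟨c, d, hcd⟩ := rigid_form C n hn.1 hn.2 hfix σ p hsym hspan (ext f) (hextsym f) A hA t h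
    rw [hcd]
    apply Submodule.add_mem
    · exact Submodule.smul_mem _ _ (Submodule.subset_span (by simp [w1]))
    · exact Submodule.smul_mem _ _ (Submodule.subset_span (by simp [w2]))
  have h1 := Submodule.finrank_mono hle
  have h2 := finrank_span_finset_le_card (R := ℝ) ({w1, w2} : Finset (V → Euc 3))
  have h3 : ({w1, w2} : Finset (V → Euc 3)).card ≤ 2 := Finset.card_le_two
  have h4 : Module.finrank ℝ (K.map ext) = Module.finrank ℝ K :=
    (Submodule.equivMapOfInjective ext hextinj K).finrank_eq.symm
  unfold Set.finrank at h2
  omega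
end
end
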